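/- arXiv:1502.06253 — 2 statements merged into one kernel-verified Lean document; each statement's English description precedes it below -/
import Mathlib

section
/- Let C₁ and C₂ be bounded cochain complexes of finite-dimensional real vector spaces indexed by the natural numbers such that dim C₁^i = dim C₂^i for every degree i. Let f : C₁ → C₂ be a chain map that is a homotopy equivalence. Then there exists a chain isomorphism f' : C₁ → C₂ that is chain homotopic to f. -/
/-- A cochain complex of real vector spaces indexed by the natural numbers. -/
structure CochainComplexNat where
  X : ℕ → Type
  [addCommGroup : ∀ i, AddCommGroup (X i)]
  [module : ∀ i, Module ℝ (X i)]
  d : ∀ i, X i →ₗ[ℝ] X (i + 1)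
  d_comp_d : ∀ i, (d (i + 1)).comp (d i) = 0

attribute [instance] CochainComplexNat.addCommGroup CochainComplexNat.module

/-- A chain map between ℕ-indexed cochain complexes: a family of linear maps
commuting with the differentials. -/
structure ChainMap (C₁ C₂ : CochainComplexNat) where
  f : ∀ i, C₁.X i →ₗ[ℝ] C₂.X i
  comm : ∀ i, (C₂.d i).comp (f i) = (f (i + 1)).comp (C₁.d i)

/-- The identity chain map. -/
def ChainMap.id (C : CochainComplexNat) : ChainMap C C where
  f _ := LinearMap.id
  comm _ := by simp

/-- Composition of chain maps. -/
def ChainMap.comp {C₁ C₂ C₃ : CochainComplexNat} (G : ChainMap C₂ C₃) (F : ChainMap C₁ C₂) :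
    ChainMap C₁ C₃ where
  f i := (G.f i).comp (F.f i)
  comm i := by
    ext v
    have h₁ := LinearMap.congr_fun (F.comm i) v
    have h₂ := LinearMap.congr_fun (G.comm i) (F.f i v)
    simp only [LinearMap.comp_apply] at h₁ h₂ ⊢
    rw [h₂, h₁]

/-- `Homotopic F G` : there exists a chain homotopy `Φ` from `F` to `G`, i.e. a family of
linear maps one degree down (with `Φ^0 = 0`, implemented by letting `Φ i : C₁^{i+1} → C₂^i`
play the role of `Φ^{i+1}`) with `G - F = d ∘ Φ + Φ ∘ d` in every degree. -/
def Homotopic {C₁ C₂ : CochainComplexNat} (F G : ChainMap C₁ C₂) : Prop :=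
  ∃ Φ : ∀ i, C₁.X (i + 1) →ₗ[ℝ] C₂.X i,
    (G.f 0 - F.f 0 = (Φ 0).comp (C₁.d 0)) ∧
    ∀ i, G.f (i + 1) - F.f (i + 1) = (C₂.d i).comp (Φ i) + (Φ (i + 1)).comp (C₁.d (i + 1))

/-- A chain map is a homotopy equivalence if it has a chain-homotopy inverse. -/
def IsHomotopyEquiv {C₁ C₂ : CochainComplexNat} (F : ChainMap C₁ C₂) : Prop :=
  ∃ G : ChainMap C₂ C₁,
    Homotopic (G.comp F) (ChainMap.id C₁) ∧ Homotopic (F.comp G) (ChainMap.id C₂)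

/-- Every linear map between vector spaces has a generalized inverse. -/
theorem LinearMap.exists_generalizedInverse {K V W : Type*} [Field K] [AddCommGroup V]
    [Module K V] [AddCommGroup W] [Module K W] (d : V →ₗ[K] W) :
    ∃ s : W →ₗ[K] V, ∀ x, d (s (d x)) = d x := by
  obtain ⟨g, hg⟩ := d.rangeRestrict.exists_rightInverse_of_surjective d.range_rangeRestrict
  obtain ⟨s, hs⟩ := g.exists_extend
  refine ⟨s, fun x => ?_⟩
  have h₁ : s (d x) = g (d.rangeRestrict x) := LinearMap.congr_fun hs (d.rangeRestrict x)
  have h₂ := congrArg Subtype.val (LinearMap.congr_fun hg (d.rangeRestrict x))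
  rw [h₁]
  exact h₂

namespace CochainComplexNat

/-- The coboundaries of degree `i`. -/
def boundaries (C : CochainComplexNat) : ∀ i, Submodule ℝ (C.X i)
  | 0 => ⊥
  | i + 1 => LinearMap.range (C.d i)

theorem d_d_apply (C : CochainComplexNat) (i : ℕ) (x : C.X i) : C.d (i + 1) (C.d i x) = 0 :=
  LinearMap.congr_fun (C.d_comp_d i) x

theorem d_mem_boundaries (C : CochainComplexNat) (i : ℕ) (x : C.X i) :
    C.d i x ∈ C.boundaries (i + 1) :=
  ⟨x, rfl⟩

theorem d_eq_zero_of_mem_boundaries (C : CochainComplexNat) {i : ℕ} {x : C.X i}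
    (hx : x ∈ C.boundaries i) : C.d i x = 0 := by
  cases i with
  | zero =>
    rw [(Submodule.mem_bot ℝ).1 hx, map_zero]
  | succ i =>
    obtain ⟨y, rfl⟩ := hx
    exact C.d_d_apply i y

theorem exists_boundaries_retraction (C : CochainComplexNat) (i : ℕ) :
    ∃ r : C.X i →ₗ[ℝ] C.boundaries i, ∀ b : C.boundaries i, r b = b := by
  obtain ⟨r, hr⟩ := (C.boundaries i).subtype.exists_leftInverse_of_injective
    (C.boundaries i).ker_subtype
  exact ⟨r, LinearMap.congr_fun hr⟩

end CochainComplexNat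

namespace ChainMap

variable {C₁ C₂ : CochainComplexNat}

theorem comm_apply (F : ChainMap C₁ C₂) (i : ℕ) (x : C₁.X i) :
    C₂.d i (F.f i x) = F.f (i + 1) (C₁.d i x) :=
  LinearMap.congr_fun (F.comm i) x

theorem map_mem_boundaries (F : ChainMap C₁ C₂) {i : ℕ} {x : C₁.X i}
    (hx : x ∈ C₁.boundaries i) : F.f i x ∈ C₂.boundaries i := by
  cases i with
  | zero =>
    rw [(Submodule.mem_bot ℝ).1 hx, map_zero]
    exact zero_mem _
  | succ i =>
    obtain ⟨y, rfl⟩ := hx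
    rw [← F.comm_apply]
    exact C₂.d_mem_boundaries i _

/-- A chain map is injective on cohomology if cycles mapped to coboundaries are coboundaries. -/
def InjectiveOnCohomology (F : ChainMap C₁ C₂) : Prop :=
  ∀ i (z : C₁.X i), C₁.d i z = 0 → F.f i z ∈ C₂.boundaries i → z ∈ C₁.boundaries i

end ChainMap

section

variable {C₁ C₂ : CochainComplexNat}

theorem Homotopic.sub_mem_boundaries {F G : ChainMap C₁ C₂} (h : Homotopic F G) {i : ℕ}
    {z : C₁.X i} (hz : C₁.d i z = 0) : G.f i z - F.f i z ∈ C₂.boundaries i := by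
  obtain ⟨Φ, h₀, h₁⟩ := h
  cases i with
  | zero =>
    have h := LinearMap.congr_fun h₀ z
    simp only [LinearMap.sub_apply, LinearMap.comp_apply, hz, map_zero] at h
    rw [h]
    exact zero_mem _
  | succ i =>
    have h := LinearMap.congr_fun (h₁ i) z
    simp only [LinearMap.sub_apply, LinearMap.add_apply, LinearMap.comp_apply, hz, map_zero,
      add_zero] at h
    rw [h]
    exact C₂.d_mem_boundaries i _

/-- Chain maps of complexes of vector spaces which agree on cohomology are homotopic. -/
theorem homotopic_of_sub_mem_boundaries {F G : ChainMap C₁ C₂}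
    (h : ∀ i (z : C₁.X i), C₁.d i z = 0 → G.f i z - F.f i z ∈ C₂.boundaries i) :
    Homotopic F G := by
  choose s₁ hs₁ using fun i => (C₁.d i).exists_generalizedInverse
  choose s₂ hs₂ using fun i => (C₂.d i).exists_generalizedInverse
  let D : ∀ i, C₁.X i →ₗ[ℝ] C₂.X i := fun i => G.f i - F.f i
  have hD : ∀ i x, C₂.d i (D i x) = D (i + 1) (C₁.d i x) := fun i x => by
    simp only [D, LinearMap.sub_apply, map_sub, ChainMap.comm_apply]
  have hcycle : ∀ i x, D i (x - s₁ i (C₁.d i x)) ∈ C₂.boundaries i := fun i x =>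
    h i _ (by rw [map_sub, hs₁, sub_self])
  have hdown : ∀ i x, s₂ i (D (i + 1) (C₁.d i x)) = s₂ i (C₂.d i (D i (s₁ i (C₁.d i x)))) :=
    fun i x => by rw [hD, hs₁]
  refine ⟨fun i => s₂ i ∘ₗ D (i + 1) ∘ₗ (LinearMap.id - s₁ (i + 1) ∘ₗ C₁.d (i + 1)) +
    (LinearMap.id - s₂ i ∘ₗ C₂.d i) ∘ₗ D i ∘ₗ s₁ i, ?_, fun i => ?_⟩
  · ext x
    have h₀ : D 0 (x - s₁ 0 (C₁.d 0 x)) = 0 := (Submodule.mem_bot ℝ).1 (hcycle 0 x)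
    rw [map_sub, sub_eq_zero] at h₀
    change D 0 x = _
    simp only [LinearMap.add_apply, LinearMap.comp_apply, LinearMap.sub_apply, LinearMap.id_apply,
      C₁.d_d_apply, map_zero, sub_zero]
    rw [hdown, h₀]
    abel
  · ext x
    obtain ⟨y, hy⟩ := hcycle (i + 1) x
    have hb : C₂.d i (s₂ i (D (i + 1) (x - s₁ (i + 1) (C₁.d (i + 1) x)))) =
        D (i + 1) (x - s₁ (i + 1) (C₁.d (i + 1) x)) := by
      rw [← hy, hs₂]
    change D (i + 1) x = _
    simp only [LinearMap.add_apply, LinearMap.comp_apply, LinearMap.sub_apply, LinearMap.id_apply,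
      C₁.d_d_apply, map_zero, sub_zero, map_add]
    rw [hb, hdown, map_sub (C₂.d i), hs₂, map_sub]
    abel

theorem Homotopic.injectiveOnCohomology_of_comp {F : ChainMap C₁ C₂} {G : ChainMap C₂ C₁}
    (h : Homotopic (G.comp F) (ChainMap.id C₁)) : F.InjectiveOnCohomology := fun _ _ hz hFz =>
  (Submodule.sub_mem_iff_left _ (G.map_mem_boundaries hFz)).1 (h.sub_mem_boundaries hz)

namespace ChainMap

theorem InjectiveOnCohomology.finrank_le [∀ i, FiniteDimensional ℝ (C₁.X i)]
    [∀ i, FiniteDimensional ℝ (C₂.X i)] {F : ChainMap C₁ C₂} (hF : F.InjectiveOnCohomology)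
    (i : ℕ) :
    Module.finrank ℝ (LinearMap.ker (C₁.d i)) + Module.finrank ℝ (C₂.boundaries i) ≤
      Module.finrank ℝ (LinearMap.ker (C₂.d i)) + Module.finrank ℝ (C₁.boundaries i) := by
  obtain ⟨r, hr⟩ := C₁.exists_boundaries_retraction i
  let Z := LinearMap.ker (C₁.d i)
  let q : C₁.X i →ₗ[ℝ] C₁.X i := LinearMap.id - (C₁.boundaries i).subtype ∘ₗ r
  have hq : ∀ x, q x = x - r x := fun x => rfl
  let u : Z × C₂.boundaries i →ₗ[ℝ] C₂.X i :=
    (F.f i ∘ₗ q ∘ₗ Z.subtype).coprod (C₂.boundaries i).subtype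
  have hu : ∀ p, u p = F.f i (p.1 - r p.1) + p.2 := fun p => rfl
  have hdu : ∀ p, u p ∈ LinearMap.ker (C₂.d i) := fun p => by
    rw [LinearMap.mem_ker, hu, map_add, C₂.d_eq_zero_of_mem_boundaries p.2.2, F.comm_apply,
      map_sub, C₁.d_eq_zero_of_mem_boundaries (r p.1).2, LinearMap.mem_ker.1 p.1.2]
    simp
  let v : Z × C₂.boundaries i →ₗ[ℝ] LinearMap.ker (C₂.d i) × C₁.boundaries i :=
    (u.codRestrict _ hdu).prod (r ∘ₗ Z.subtype ∘ₗ LinearMap.fst ℝ _ _)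
  rw [← Module.finrank_prod, ← Module.finrank_prod]
  refine LinearMap.finrank_le_finrank_of_injective (f := v) ?_
  rw [injective_iff_map_eq_zero]
  rintro ⟨z, b⟩ h
  have h₁ : F.f i (z - r z) + b = 0 := congrArg (fun p => (p.1 : C₂.X i)) h
  have h₂ : r (z : C₁.X i) = 0 := congrArg Prod.snd h
  rw [h₂, Submodule.coe_zero, sub_zero] at h₁
  have hz : (z : C₁.X i) ∈ C₁.boundaries i := by
    refine hF i z z.2 ?_
    rw [eq_neg_of_add_eq_zero_left h₁]
    exact neg_mem b.2
  have hz₀ : z = 0 := by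
    have h₃ := hr ⟨z, hz⟩
    rw [h₂] at h₃
    exact Subtype.ext (congrArg Subtype.val h₃).symm
  subst hz₀
  simp only [Submodule.coe_zero, map_zero, zero_add] at h₁
  exact Prod.ext rfl (Subtype.ext h₁)

end ChainMap

theorem finrank_boundaries_eq [∀ i, FiniteDimensional ℝ (C₁.X i)]
    [∀ i, FiniteDimensional ℝ (C₂.X i)]
    (hdim : ∀ i, Module.finrank ℝ (C₁.X i) = Module.finrank ℝ (C₂.X i))
    {F : ChainMap C₁ C₂} {G : ChainMap C₂ C₁} (hF : F.InjectiveOnCohomology)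
    (hG : G.InjectiveOnCohomology) (i : ℕ) :
    Module.finrank ℝ (C₁.boundaries i) = Module.finrank ℝ (C₂.boundaries i) := by
  induction i with
  | zero => exact (finrank_bot ℝ _).trans (finrank_bot ℝ _).symm
  | succ i ih =>
    have h₁ := (C₁.d i).finrank_range_add_finrank_ker
    have h₂ := (C₂.d i).finrank_range_add_finrank_ker
    have h₃ := hF.finrank_le i
    have h₄ := hG.finrank_le i
    have h₅ := hdim i
    change Module.finrank ℝ (LinearMap.range (C₁.d i)) =
      Module.finrank ℝ (LinearMap.range (C₂.d i))
    omega

/-- A chain map injective on cohomology is homotopic to a chain map that is injective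
in each degree, provided the coboundaries of the two complexes are isomorphic. -/
theorem ChainMap.InjectiveOnCohomology.exists_injective_homotopic {F : ChainMap C₁ C₂}
    (hF : F.InjectiveOnCohomology) (φ : ∀ i, C₁.boundaries i ≃ₗ[ℝ] C₂.boundaries i) :
    ∃ F' : ChainMap C₁ C₂, (∀ i, Function.Injective (F'.f i)) ∧ Homotopic F F' := by
  choose s₁ hs₁ using fun i => (C₁.d i).exists_generalizedInverse
  choose s₂ hs₂ using fun i => (C₂.d i).exists_generalizedInverse
  choose r hr using C₁.exists_boundaries_retraction
  let δ : ∀ i, C₁.X i →ₗ[ℝ] C₁.boundaries (i + 1) := fun i =>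
    (C₁.d i).codRestrict _ (C₁.d_mem_boundaries i)
  let ψ : ∀ i, C₁.X i →ₗ[ℝ] C₂.X i := fun i =>
    F.f i ∘ₗ (LinearMap.id - (C₁.boundaries i).subtype ∘ₗ r i) +
      (C₂.boundaries i).subtype ∘ₗ (φ i).toLinearMap ∘ₗ r i
  have hψ : ∀ i x, ψ i x = F.f i (x - r i x) + φ i (r i x) := fun i x => rfl
  let f : ∀ i, C₁.X i →ₗ[ℝ] C₂.X i := fun i =>
    ψ i ∘ₗ (LinearMap.id - s₁ i ∘ₗ C₁.d i) +
      s₂ i ∘ₗ (C₂.boundaries (i + 1)).subtype ∘ₗ (φ (i + 1)).toLinearMap ∘ₗ δ i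
  have hf : ∀ i x, f i x = ψ i (x - s₁ i (C₁.d i x)) + s₂ i (φ (i + 1) (δ i x)) :=
    fun i x => rfl
  have hdψ : ∀ i z, C₁.d i z = 0 → C₂.d i (ψ i z) = 0 := fun i z hz => by
    rw [hψ, map_add, C₂.d_eq_zero_of_mem_boundaries (φ i (r i z)).2, F.comm_apply, map_sub,
      C₁.d_eq_zero_of_mem_boundaries (r i z).2, hz]
    simp
  have hdf : ∀ i x, C₂.d i (f i x) = φ (i + 1) (δ i x) := fun i x => by
    obtain ⟨y, hy⟩ := (φ (i + 1) (δ i x)).2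
    rw [hf, map_add, hdψ i _ (by rw [map_sub, hs₁, sub_self]), ← hy, hs₂, zero_add]
  have hfz : ∀ i z, C₁.d i z = 0 → f i z = ψ i z := fun i z hz => by
    have hδ : δ i z = 0 := Subtype.ext hz
    rw [hf, hδ, hz]
    simp
  refine ⟨⟨f, fun i => LinearMap.ext fun x => ?_⟩, fun i => ?_,
    homotopic_of_sub_mem_boundaries fun i z hz => ?_⟩
  · have hrd : r (i + 1) (C₁.d i x) = δ i x := hr (i + 1) (δ i x)
    have hδ : (δ i x : C₁.X (i + 1)) = C₁.d i x := rfl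
    rw [LinearMap.comp_apply, LinearMap.comp_apply, hdf, hfz _ _ (C₁.d_d_apply i x), hψ, hrd, hδ,
      sub_self, map_zero, zero_add]
  · rw [injective_iff_map_eq_zero]
    intro x hx
    change f i x = 0 at hx
    have hδ : δ i x = 0 := by
      have h := hdf i x
      rw [hx, map_zero] at h
      exact (φ (i + 1)).map_eq_zero_iff.1 (Subtype.ext h.symm)
    have hdx : C₁.d i x = 0 := congrArg Subtype.val hδ
    rw [hfz i x hdx, hψ] at hx
    have hsub : x - r i x ∈ C₁.boundaries i := by
      refine hF i _ ?_ ?_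
      · rw [map_sub, hdx, C₁.d_eq_zero_of_mem_boundaries (r i x).2, sub_self]
      · rw [eq_neg_of_add_eq_zero_left hx]
        exact neg_mem (φ i (r i x)).2
    have hxb : x ∈ C₁.boundaries i := (Submodule.sub_mem_iff_left _ (r i x).2).1 hsub
    have hrx : (r i x : C₁.X i) = x := congrArg Subtype.val (hr i ⟨x, hxb⟩)
    rw [hrx, sub_self, map_zero, zero_add] at hx
    have hr₀ : r i x = 0 := (φ i).map_eq_zero_iff.1 (Subtype.ext hx)
    rw [← hrx, hr₀, Submodule.coe_zero]
  · change f i z - F.f i z ∈ _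
    rw [hfz i z hz, hψ, map_sub, sub_add_eq_add_sub, sub_sub, add_comm (F.f i _),
      add_sub_add_right_eq_sub]
    exact sub_mem (φ i (r i z)).2 (F.map_mem_boundaries (r i z).2)

end

/-- If `C₁` and `C₂` are bounded cochain complexes of finite-dimensional real
vector spaces with the same dimension in every degree, then any chain map `F : C₁ → C₂`
which is a homotopy equivalence is chain homotopic to a chain isomorphism. -/
theorem exists_chain_iso_homotopic_of_homotopy_equiv
    (C₁ C₂ : CochainComplexNat)
    [∀ i, FiniteDimensional ℝ (C₁.X i)] [∀ i, FiniteDimensional ℝ (C₂.X i)]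
    (N₁ : ℕ) (hbd₁ : ∀ i, N₁ ≤ i → ∀ v : C₁.X i, v = 0)
    (N₂ : ℕ) (hbd₂ : ∀ i, N₂ ≤ i → ∀ v : C₂.X i, v = 0)
    (hdim : ∀ i, Module.finrank ℝ (C₁.X i) = Module.finrank ℝ (C₂.X i))
    (F : ChainMap C₁ C₂) (hF : IsHomotopyEquiv F) :
    ∃ F' : ChainMap C₁ C₂, (∀ i, Function.Bijective (F'.f i)) ∧ Homotopic F F' := by
  obtain ⟨G, hGF, hFG⟩ := hF
  have hFi := hGF.injectiveOnCohomology_of_comp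
  have hGi := hFG.injectiveOnCohomology_of_comp
  obtain ⟨F', hinj, hhom⟩ := hFi.exists_injective_homotopic fun i =>
    LinearEquiv.ofFinrankEq _ _ (finrank_boundaries_eq hdim hFi hGi i)
  exact ⟨F', fun i => ⟨hinj i,
    (LinearMap.injective_iff_surjective_of_finrank_eq_finrank (hdim i)).1 (hinj i)⟩, hhom⟩
end

section
/- Let C be a bounded cochain complex of finite-dimensional real vector spaces indexed by the natural numbers, vanishing in degrees ≥ N, and let f : C → C be a chain map such that each f^i is a linear automorphism of C^i and f is chain homotopic to the identity chain map of C. Then the product of the determinants of f^i over even i < N equals the product of the determinants of f^i over odd i < N; equivalently, the alternating product ∏_{i<N} det(f^i)^{(-1)^i} equals 1. -/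
/-- The Weinstein–Aronszajn identity `det (1 - BA) = det (1 - AB)` for linear maps. -/
theorem LinearMap.det_id_sub_comp_comm {R V W : Type*} [CommRing R]
    [AddCommGroup V] [Module R V] [Module.Free R V] [Module.Finite R V]
    [AddCommGroup W] [Module R W] [Module.Free R W] [Module.Finite R W]
    (A : V →ₗ[R] W) (B : W →ₗ[R] V) :
    LinearMap.det (LinearMap.id - B.comp A) = LinearMap.det (LinearMap.id - A.comp B) := by
  classical
  let bV := Module.Free.chooseBasis R V
  let bW := Module.Free.chooseBasis R W
  rw [← LinearMap.det_toMatrix bV, ← LinearMap.det_toMatrix bW, map_sub, map_sub,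
    LinearMap.toMatrix_comp bV bW bV, LinearMap.toMatrix_comp bW bV bW,
    LinearMap.toMatrix_id, LinearMap.toMatrix_id, Matrix.det_one_sub_mul_comm]

theorem Finset.prod_range_mul_succ_zpow_alternating {K : Type*} [Field K] (b : ℕ → K)
    (hb : ∀ i, b i ≠ 0) (h0 : b 0 = 1) (n : ℕ) :
    ∏ i ∈ Finset.range n, (b (i + 1) * b i) ^ ((-1 : ℤ) ^ i) = b n ^ (-(-1 : ℤ) ^ n) := by
  induction n with
  | zero => simp [h0]
  | succ n ih =>
    rw [Finset.prod_range_succ, ih, mul_zpow, pow_succ, mul_neg_one, neg_neg, mul_left_comm,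
      ← zpow_add₀ (hb n), neg_add_cancel, zpow_zero, mul_one]

theorem Finset.prod_zpow_alternating_eq_div {K : Type*} [Field K] (s : Finset ℕ) (g : ℕ → K) :
    ∏ i ∈ s, g i ^ ((-1 : ℤ) ^ i) =
      (∏ i ∈ s.filter (fun i => Even i), g i) / ∏ i ∈ s.filter (fun i => ¬ Even i), g i := by
  rw [← Finset.prod_filter_mul_prod_filter_not s (fun i => Even i), div_eq_mul_inv,
    ← Finset.prod_inv_distrib]
  congr 1 <;> refine Finset.prod_congr rfl fun i hi => ?_
  · rw [(Finset.mem_filter.mp hi).2.neg_one_pow, zpow_one]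
  · rw [(Nat.not_even_iff_odd.mp (Finset.mem_filter.mp hi).2).neg_one_pow, zpow_neg_one]

/-- If `C` is a bounded cochain complex of finite-dimensional real vector
spaces vanishing in degrees `≥ N`, and `F : C → C` is a chain automorphism that is chain
homotopic to the identity, then the product of `det (F^i)` over even `i < N` equals the
product over odd `i < N`; equivalently, the alternating product
`∏_{i<N} det(F^i)^{(-1)^i}` equals `1`. -/
theorem alternating_det_eq_one_of_homotopic_to_id
    (C : CochainComplexNat) [∀ i, FiniteDimensional ℝ (C.X i)]
    (N : ℕ) (hbd : ∀ i, N ≤ i → ∀ v : C.X i, v = 0)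
    (F : ChainMap C C) (hbij : ∀ i, Function.Bijective (F.f i))
    (hhom : Homotopic F (ChainMap.id C)) :
    (∏ i ∈ (Finset.range N).filter (fun i => Even i), LinearMap.det (F.f i)) =
      (∏ i ∈ (Finset.range N).filter (fun i => ¬ Even i), LinearMap.det (F.f i)) ∧
    ∏ i ∈ Finset.range N, LinearMap.det (F.f i) ^ ((-1 : ℤ) ^ i) = 1 := by
  obtain ⟨Φ, hΦ0, hΦ⟩ := hhom
  have hF0 : F.f 0 = LinearMap.id - (Φ 0).comp (C.d 0) := by
    rw [← hΦ0]
    simp [ChainMap.id]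
  -- The cross term `Φ d d Φ` vanishes, so `1 - Φ d - d Φ` factors.
  have hF (i : ℕ) : F.f (i + 1) = (LinearMap.id - (Φ (i + 1)).comp (C.d (i + 1))).comp
      (LinearMap.id - (C.d i).comp (Φ i)) := by
    ext v
    have hv := LinearMap.congr_fun (hΦ i) v
    have hd := LinearMap.congr_fun (C.d_comp_d i) (Φ i v)
    simp only [ChainMap.id, LinearMap.sub_apply, LinearMap.add_apply, LinearMap.comp_apply,
      LinearMap.id_apply, LinearMap.zero_apply, map_sub] at hv hd ⊢
    rw [hd, map_zero, sub_zero, sub_right_comm, sub_sub, ← hv, sub_sub_cancel]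
  let b : ℕ → ℝ
    | 0 => 1
    | i + 1 => LinearMap.det (LinearMap.id - (Φ i).comp (C.d i))
  have hdet : ∀ i, LinearMap.det (F.f i) = b (i + 1) * b i
    | 0 => by simp [b, hF0]
    | i + 1 => by
      simp only [b]
      rw [hF, LinearMap.det_comp, LinearMap.det_id_sub_comp_comm (C.d i)]
  have hdet_ne (i : ℕ) : LinearMap.det (F.f i) ≠ 0 :=
    (LinearEquiv.isUnit_det' (LinearEquiv.ofBijective (F.f i) (hbij i))).ne_zero
  have hb : ∀ i, b i ≠ 0
    | 0 => one_ne_zero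
    | i + 1 => left_ne_zero_of_mul (hdet i ▸ hdet_ne i)
  have hbN : b N = 1 := by
    cases N with
    | zero => rfl
    | succ n =>
      have hd : C.d n = 0 := LinearMap.ext fun v => hbd (n + 1) le_rfl _
      simp [b, hd]
  have halt : ∏ i ∈ Finset.range N, LinearMap.det (F.f i) ^ ((-1 : ℤ) ^ i) = 1 := by
    simp_rw [hdet]
    rw [Finset.prod_range_mul_succ_zpow_alternating b hb rfl, hbN, one_zpow]
  refine ⟨?_, halt⟩
  rw [Finset.prod_zpow_alternating_eq_div] at halt
  exact eq_of_div_eq_one halt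
end
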